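/- Let g₀ be constant symmetric invertible 2×2, ε = ±1, φ : ℝ² → ℝ smooth with ρ = 1 + ε g₀^{μν} φ_{,μ} φ_{,ν} > 0, satisfying the minimal surface equation h^{αβ} φ_{,αβ} = 0. Define g_{αβ} = ρ^{-1/2} h_{αβ}. Then g satisfies the sigma model equation ∂_α [g^{αβ} g^{-1} ∂_β g] = 0, where g and g^{-1} are the 2×2 matrices with entries g_{αβ} and g^{αβ} = ρ^{1/2}(g₀^{αβ} − (ε/ρ) φ^α φ^β). -/

import Mathlib

open Matrix Real

/-- First partial derivative in direction `i`. -/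
noncomputable def pd (i : Fin 2) (f : (Fin 2 → ℝ) → ℝ) (p : Fin 2 → ℝ) : ℝ :=
  fderiv ℝ f p (Pi.single i 1)

/-- Second partial derivative. -/
noncomputable def pd2 (i j : Fin 2) (f : (Fin 2 → ℝ) → ℝ) (p : Fin 2 → ℝ) : ℝ :=
  pd i (fun q => pd j f q) p

/-- Third partial derivative. -/
noncomputable def pd3 (i j k : Fin 2) (f : (Fin 2 → ℝ) → ℝ) (p : Fin 2 → ℝ) : ℝ :=
  pd i (fun q => pd2 j k f q) p

/-- `φ^μ = g₀^{μα} φ_{,α}` (index raised with the inverse of `g₀`). -/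
noncomputable def phiUp (g₀ : Matrix (Fin 2) (Fin 2) ℝ) (φ : (Fin 2 → ℝ) → ℝ)
    (p : Fin 2 → ℝ) (μ : Fin 2) : ℝ :=
  ∑ α, g₀⁻¹ μ α * pd α φ p

/-- `ρ = 1 + ε g₀^{μν} φ_{,μ} φ_{,ν}`. -/
noncomputable def rho (g₀ : Matrix (Fin 2) (Fin 2) ℝ) (ε : ℝ) (φ : (Fin 2 → ℝ) → ℝ)
    (p : Fin 2 → ℝ) : ℝ :=
  1 + ε * ∑ μ, ∑ ν, g₀⁻¹ μ ν * pd μ φ p * pd ν φ p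

/-- Induced metric `h_{μν} = g₀_{μν} + ε φ_{,μ} φ_{,ν}` of the graph surface. -/
noncomputable def hLow (g₀ : Matrix (Fin 2) (Fin 2) ℝ) (ε : ℝ) (φ : (Fin 2 → ℝ) → ℝ)
    (p : Fin 2 → ℝ) : Matrix (Fin 2) (Fin 2) ℝ :=
  fun μ ν => g₀ μ ν + ε * pd μ φ p * pd ν φ p

/-- `h^{μν} = g₀^{μν} - (ε/ρ) φ^μ φ^ν`. -/
noncomputable def hUp (g₀ : Matrix (Fin 2) (Fin 2) ℝ) (ε : ℝ) (φ : (Fin 2 → ℝ) → ℝ)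
    (p : Fin 2 → ℝ) : Matrix (Fin 2) (Fin 2) ℝ :=
  fun μ ν => g₀⁻¹ μ ν - (ε / rho g₀ ε φ p) * phiUp g₀ φ p μ * phiUp g₀ φ p ν

/-- `λ₀ = (1/2)[φ^{αβ} φ_{,αβ} - (φ^α_{,α})²]`. -/
noncomputable def lam0 (g₀ : Matrix (Fin 2) (Fin 2) ℝ) (φ : (Fin 2 → ℝ) → ℝ)
    (p : Fin 2 → ℝ) : ℝ :=
  (1/2) * ((∑ α, ∑ β, (∑ μ, ∑ ν, g₀⁻¹ α μ * g₀⁻¹ β ν * pd2 μ ν φ p) * pd2 α β φ p)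
    - (∑ α, ∑ β, g₀⁻¹ α β * pd2 α β φ p)^2)

/-- Conformal metric `g_{αβ} = ρ^{-1/2} h_{αβ}`. -/
noncomputable def gLow (g₀ : Matrix (Fin 2) (Fin 2) ℝ) (ε : ℝ) (φ : (Fin 2 → ℝ) → ℝ)
    (p : Fin 2 → ℝ) : Matrix (Fin 2) (Fin 2) ℝ :=
  fun α β => (Real.sqrt (rho g₀ ε φ p))⁻¹ * (g₀ α β + ε * pd α φ p * pd β φ p)

/-- Inverse conformal metric `g^{αβ} = ρ^{1/2} (g₀^{αβ} - (ε/ρ) φ^α φ^β)`. -/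
noncomputable def gUp (g₀ : Matrix (Fin 2) (Fin 2) ℝ) (ε : ℝ) (φ : (Fin 2 → ℝ) → ℝ)
    (p : Fin 2 → ℝ) : Matrix (Fin 2) (Fin 2) ℝ :=
  fun α β => Real.sqrt (rho g₀ ε φ p) *
    (g₀⁻¹ α β - (ε / rho g₀ ε φ p) * phiUp g₀ φ p α * phiUp g₀ φ p β)

/-- The minimality condition `h^{αβ} φ_{,αβ} = 0` at a point. -/
noncomputable def minimalAt (g₀ : Matrix (Fin 2) (Fin 2) ℝ) (ε : ℝ) (φ : (Fin 2 → ℝ) → ℝ)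
    (p : Fin 2 → ℝ) : Prop :=
  ∑ α, ∑ β, hUp g₀ ε φ p α β * pd2 α β φ p = 0

open Filter Topology

/-!
By the matrix determinant lemma `det g = det g₀` is constant, and the minimal surface equation
implies the Codazzi equation `∂_α g_{βγ} = ∂_γ g_{βα}`. For any symmetric `g` with these
two properties,
`g^{αβ} g^{μγ} ∂_β g_{γν} = g^{αβ} (∂_ν g_{βγ}) g^{γμ} = -∂_ν g^{αμ}`,
while `g^{αμ}` is a constant multiple of the adjugate of `g`, whose divergence `∂_α g^{αμ}`
vanishes by the Codazzi equation. Since partial derivatives commute, the divergence of the current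
vanishes as well.
-/

section PartialDerivatives

variable {f g : (Fin 2 → ℝ) → ℝ} {p : Fin 2 → ℝ}

lemma pd_congr (i : Fin 2) (h : f =ᶠ[𝓝 p] g) : pd i f p = pd i g p := by
  rw [pd, pd, h.fderiv_eq]

lemma pd_const (i : Fin 2) (c : ℝ) (p : Fin 2 → ℝ) : pd i (fun _ => c) p = 0 := by
  simp [pd]

lemma pd_neg (i : Fin 2) (f : (Fin 2 → ℝ) → ℝ) (p : Fin 2 → ℝ) :
    pd i (fun q => -f q) p = -pd i f p := by
  simp [pd, fderiv_fun_neg]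

lemma pd_add (i : Fin 2) (hf : DifferentiableAt ℝ f p) (hg : DifferentiableAt ℝ g p) :
    pd i (fun q => f q + g q) p = pd i f p + pd i g p := by
  simp [pd, fderiv_fun_add hf hg]

lemma pd_mul (i : Fin 2) (hf : DifferentiableAt ℝ f p) (hg : DifferentiableAt ℝ g p) :
    pd i (fun q => f q * g q) p = pd i f p * g p + f p * pd i g p := by
  simp [pd, fderiv_fun_mul hf hg, mul_comm, add_comm]

lemma pd_const_mul (i : Fin 2) (c : ℝ) (hf : DifferentiableAt ℝ f p) :
    pd i (fun q => c * f q) p = c * pd i f p := by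
  simp [pd, fderiv_const_mul hf]

lemma pd_sum {ι : Type*} [Fintype ι] (i : Fin 2) {F : ι → (Fin 2 → ℝ) → ℝ}
    (hF : ∀ k, DifferentiableAt ℝ (F k) p) :
    pd i (fun q => ∑ k, F k q) p = ∑ k, pd i (F k) p := by
  simp [pd, fderiv_fun_sum fun k _ => hF k]

lemma pd_inv_sqrt (i : Fin 2) (hf : DifferentiableAt ℝ f p) (hpos : 0 < f p) :
    pd i (fun q => (√(f q))⁻¹) p = -pd i f p / (2 * √(f p) ^ 3) := by
  have hs : √(f p) ≠ 0 := (Real.sqrt_pos.2 hpos).ne'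
  have h := ((Real.hasDerivAt_sqrt hpos.ne').inv hs).comp_hasFDerivAt p hf.hasFDerivAt
  have h' : fderiv ℝ (fun q => (√(f q))⁻¹) p = _ := h.fderiv
  simp only [pd, h', FunLike.coe_smul, Pi.smul_apply, smul_eq_mul]
  field_simp

lemma contDiffAt_pd {m n : WithTop ℕ∞} (i : Fin 2) (hf : ContDiffAt ℝ n f p) (hmn : m + 1 ≤ n) :
    ContDiffAt ℝ m (pd i f) p :=
  (hf.fderiv_right hmn).clm_apply contDiffAt_const

lemma pd_pd_eq_fderiv_fderiv (i j : Fin 2) (hf : ContDiffAt ℝ 2 f p) :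
    pd i (pd j f) p = fderiv ℝ (fderiv ℝ f) p (Pi.single i 1) (Pi.single j 1) := by
  have hd : DifferentiableAt ℝ (fderiv ℝ f) p :=
    (hf.fderiv_right (m := 1) (by norm_num)).differentiableAt (by norm_num)
  change fderiv ℝ (fun q => fderiv ℝ f q (Pi.single j 1)) p _ = _
  simp [fderiv_clm_apply hd (differentiableAt_const _)]

lemma pd_pd_comm (i j : Fin 2) (hf : ContDiffAt ℝ 2 f p) :
    pd i (pd j f) p = pd j (pd i f) p := by
  rw [pd_pd_eq_fderiv_fderiv i j hf, pd_pd_eq_fderiv_fderiv j i hf]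
  exact hf.isSymmSndFDerivAt (by simp) _ _

end PartialDerivatives

section MatrixFields

variable {l m n : Type*} {p : Fin 2 → ℝ}

/-- Entrywise partial derivative `∂_i A` of a matrix field `A`. -/
noncomputable def matrixPd (i : Fin 2) (A : (Fin 2 → ℝ) → Matrix m n ℝ) (p : Fin 2 → ℝ) :
    Matrix m n ℝ :=
  Matrix.of fun a b => pd i (fun q => A q a b) p

lemma matrixPd_congr (i : Fin 2) {A B : (Fin 2 → ℝ) → Matrix m n ℝ} (h : A =ᶠ[𝓝 p] B) :
    matrixPd i A p = matrixPd i B p := by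
  ext a b
  exact pd_congr i (h.mono fun q hq => congrFun₂ hq a b)

lemma matrixPd_mul [Fintype m] (i : Fin 2) {A : (Fin 2 → ℝ) → Matrix l m ℝ}
    {B : (Fin 2 → ℝ) → Matrix m n ℝ} (hA : ∀ a b, DifferentiableAt ℝ (fun q => A q a b) p)
    (hB : ∀ a b, DifferentiableAt ℝ (fun q => B q a b) p) :
    matrixPd i (fun q => A q * B q) p = matrixPd i A p * B p + A p * matrixPd i B p := by
  ext a b
  simp only [matrixPd, Matrix.of_apply, Matrix.add_apply, Matrix.mul_apply]
  rw [pd_sum i fun k => (hA a k).fun_mul (hB k b), ← Finset.sum_add_distrib]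
  exact Finset.sum_congr rfl fun k _ => pd_mul i (hA a k) (hB k b)

lemma matrixPd_inv [Fintype n] [DecidableEq n] (i : Fin 2) {A : (Fin 2 → ℝ) → Matrix n n ℝ}
    (hA : ∀ a b, DifferentiableAt ℝ (fun q => A q a b) p)
    (hA' : ∀ a b, DifferentiableAt ℝ (fun q => (A q)⁻¹ a b) p)
    (hdet : ∀ᶠ q in 𝓝 p, IsUnit (A q).det) :
    matrixPd i (fun q => (A q)⁻¹) p = -((A p)⁻¹ * matrixPd i A p * (A p)⁻¹) := by
  have hconst : matrixPd i (fun q => (A q)⁻¹ * A q) p = 0 := by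
    rw [matrixPd_congr i (hdet.mono fun q hq => Matrix.nonsing_inv_mul (A q) hq)]
    ext a b
    exact pd_const i _ p
  rw [matrixPd_mul i hA' hA] at hconst
  rw [← Matrix.mul_nonsing_inv_cancel_right (A p) (matrixPd i (fun q => (A q)⁻¹) p)
    hdet.self_of_nhds, eq_neg_of_add_eq_zero_left hconst, Matrix.neg_mul]

lemma isSymm_matrixPd (i : Fin 2) {A : (Fin 2 → ℝ) → Matrix n n ℝ}
    (hA : ∀ᶠ q in 𝓝 p, (A q).IsSymm) : (matrixPd i A p).IsSymm := by
  ext a b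
  exact pd_congr i (hA.mono fun q hq => hq.apply a b)

end MatrixFields

section SigmaModel

variable {g : (Fin 2 → ℝ) → Matrix (Fin 2) (Fin 2) ℝ} {p : Fin 2 → ℝ} {c : ℝ}

/-- The matrix-valued sigma model current `g^{αβ} g⁻¹ ∂_β g` of a metric `g`. -/
noncomputable def sigmaCurrent (g : (Fin 2 → ℝ) → Matrix (Fin 2) (Fin 2) ℝ) (α : Fin 2)
    (p : Fin 2 → ℝ) : Matrix (Fin 2) (Fin 2) ℝ :=
  ∑ β, (g p)⁻¹ α β • ((g p)⁻¹ * matrixPd β g p)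

/-- The Codazzi equation `∂_α g_{βγ} = ∂_γ g_{βα}` at a point, with the flat connection of the
coordinates. For symmetric `g` it says that `g` is locally a Hessian. -/
def IsCodazziAt (g : (Fin 2 → ℝ) → Matrix (Fin 2) (Fin 2) ℝ) (p : Fin 2 → ℝ) : Prop :=
  ∀ α β γ, matrixPd α g p β γ = matrixPd γ g p β α

lemma inv_apply_eq_of_det_eq {K : Type*} [Field K] {A : Matrix (Fin 2) (Fin 2) K} {d : K}
    (hA : A.det = d) (a b : Fin 2) :
    A⁻¹ a b = d⁻¹ * (-1) ^ (a + b : ℕ) * A (b + 1) (a + 1) := by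
  rw [Matrix.inv_def, hA, Ring.inverse_eq_inv, Matrix.adjugate_fin_two]
  fin_cases a <;> fin_cases b <;> simp

lemma inv_apply_eventuallyEq (hdet : ∀ᶠ q in 𝓝 p, (g q).det = c) (a b : Fin 2) :
    (fun q => (g q)⁻¹ a b) =ᶠ[𝓝 p]
      fun q => c⁻¹ * (-1) ^ (a + b : ℕ) * g q (b + 1) (a + 1) :=
  hdet.mono fun _ hq => inv_apply_eq_of_det_eq hq a b

-- In dimension two the inverse of a matrix of constant determinant is linear in its entries, so
-- its divergence is a difference of two first derivatives, equal by the Codazzi equation.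
lemma sum_matrixPd_inv_eq_zero (hg : ∀ a b, DifferentiableAt ℝ (fun q => g q a b) p)
    (hdet : ∀ᶠ q in 𝓝 p, (g q).det = c) (hcod : IsCodazziAt g p) (μ : Fin 2) :
    ∑ α, matrixPd α (fun q => (g q)⁻¹) p α μ = 0 := by
  have hinv (α : Fin 2) : matrixPd α (fun q => (g q)⁻¹) p α μ =
      c⁻¹ * (-1) ^ (α + μ : ℕ) * matrixPd α g p (μ + 1) (α + 1) :=
    (pd_congr α (inv_apply_eventuallyEq hdet α μ)).trans (pd_const_mul α _ (hg _ _))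
  have hswap : matrixPd 0 g p (μ + 1) 1 = matrixPd 1 g p (μ + 1) 0 := hcod 0 (μ + 1) 1
  simp [Fin.sum_univ_two, hinv, hswap, pow_add]

lemma sigmaCurrent_apply_eq_neg_matrixPd_inv
    (hg : ∀ a b, DifferentiableAt ℝ (fun q => g q a b) p)
    (hsymm : ∀ᶠ q in 𝓝 p, (g q).IsSymm) (hc : c ≠ 0) (hdet : ∀ᶠ q in 𝓝 p, (g q).det = c)
    (hcod : IsCodazziAt g p) (α μ ν : Fin 2) :
    sigmaCurrent g α p μ ν = -matrixPd ν (fun q => (g q)⁻¹) p α μ := by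
  have hpd (β γ : Fin 2) : matrixPd β g p γ ν = matrixPd ν g p β γ := by
    rw [hcod, (isSymm_matrixPd ν hsymm).apply]
  have hinv : matrixPd ν (fun q => (g q)⁻¹) p = -((g p)⁻¹ * matrixPd ν g p * (g p)⁻¹) :=
    matrixPd_inv ν hg
      (fun a b => ((hg _ _).const_mul _).congr_of_eventuallyEq (inv_apply_eventuallyEq hdet a b))
      (hdet.mono fun q hq => hq ▸ hc.isUnit)
  have hK : (g p)⁻¹.IsSymm := hsymm.self_of_nhds.inv
  rw [hinv]
  simp only [sigmaCurrent, Matrix.sum_apply, Matrix.smul_apply, Matrix.mul_apply, hpd,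
    Matrix.neg_apply, neg_neg, smul_eq_mul, Finset.mul_sum, Finset.sum_mul, hK.apply μ]
  rw [Finset.sum_comm]
  exact Finset.sum_congr rfl fun _ _ => Finset.sum_congr rfl fun _ _ => by ring

theorem sum_matrixPd_sigmaCurrent_eq_zero (hg : ∀ a b, ContDiffAt ℝ 2 (fun q => g q a b) p)
    (hsymm : ∀ᶠ q in 𝓝 p, (g q).IsSymm) (hc : c ≠ 0) (hdet : ∀ᶠ q in 𝓝 p, (g q).det = c)
    (hcod : ∀ᶠ q in 𝓝 p, IsCodazziAt g q) :
    ∑ α, matrixPd α (sigmaCurrent g α) p = 0 := by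
  have hg' : ∀ᶠ q in 𝓝 p, ∀ a b, DifferentiableAt ℝ (fun r => g r a b) q := by
    simp only [eventually_all]
    exact fun a b => ((hg a b).eventually (by simp)).mono
      fun q hq => hq.differentiableAt two_ne_zero
  have hK (a b : Fin 2) : ContDiffAt ℝ 2 (fun q => (g q)⁻¹ a b) p :=
    (contDiffAt_const.mul (hg _ _)).congr_of_eventuallyEq (inv_apply_eventuallyEq hdet a b)
  ext μ ν
  have hJ (α : Fin 2) : (fun q => sigmaCurrent g α q μ ν) =ᶠ[𝓝 p]
      fun q => -pd ν (fun r => (g r)⁻¹ α μ) q := by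
    filter_upwards [hg', hsymm.eventually_nhds, hdet.eventually_nhds, hcod]
      with q hq hsymm_q hdet_q hcod_q
    exact sigmaCurrent_apply_eq_neg_matrixPd_inv hq hsymm_q hc hdet_q hcod_q α μ ν
  have hdiv : (fun q => ∑ α, pd α (fun r => (g r)⁻¹ α μ) q) =ᶠ[𝓝 p] fun _ => 0 := by
    filter_upwards [hg', hdet.eventually_nhds, hcod] with q hq hdet_q hcod_q
    exact sum_matrixPd_inv_eq_zero hq hdet_q hcod_q μ
  calc (∑ α, matrixPd α (sigmaCurrent g α) p) μ ν
      = ∑ α, pd α (fun q => sigmaCurrent g α q μ ν) p := Matrix.sum_apply ..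
    _ = -∑ α, pd ν (pd α fun q => (g q)⁻¹ α μ) p := by
        simp only [pd_congr _ (hJ _), pd_neg, Finset.sum_neg_distrib, pd_pd_comm _ ν (hK _ μ)]
    _ = -pd ν (fun q => ∑ α, pd α (fun r => (g r)⁻¹ α μ) q) p := by
        rw [pd_sum ν fun α => (contDiffAt_pd α (hK α μ) one_add_one_eq_two.le).differentiableAt
          one_ne_zero]
    _ = 0 := by rw [pd_congr ν hdiv, pd_const, neg_zero]

end SigmaModel

section KulkarniNomizu

variable {K : Type*} [Field K] {h s : Matrix (Fin 2) (Fin 2) K}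

-- The difference of the two sides is a Kulkarni–Nomizu product, whose only independent component
-- in dimension two is `-det h` times the trace of `s` with respect to `h`.
lemma mul_add_mul_eq_of_sum_inv_mul_eq_zero (hh : h.IsSymm) (hs : s.IsSymm) (hdet : h.det ≠ 0)
    (htr : ∑ α, ∑ β, h⁻¹ α β * s α β = 0) (α β γ μ : Fin 2) :
    h γ μ * s α β + s γ μ * h α β = h α μ * s γ β + s α μ * h γ β := by
  have hh' : h 1 0 = h 0 1 := hh.apply 0 1
  have hs' : s 1 0 = s 0 1 := hs.apply 0 1
  have htr' : h 1 1 * s 0 0 - 2 * h 0 1 * s 0 1 + h 0 0 * s 1 1 = 0 := by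
    simp only [Matrix.inv_def, Ring.inverse_eq_inv, Matrix.smul_apply, smul_eq_mul, mul_assoc,
      ← Finset.mul_sum, mul_eq_zero, inv_eq_zero, hdet, false_or] at htr
    simp only [Matrix.adjugate_fin_two, Fin.sum_univ_two, Matrix.of_apply, Matrix.cons_val_zero,
      Matrix.cons_val_one, hh', hs'] at htr
    linear_combination htr
  fin_cases α <;> fin_cases β <;> fin_cases γ <;> fin_cases μ <;>
    simp only [Fin.zero_eta, Fin.mk_one, hh', hs'] <;>
    first | ring1 | linear_combination htr' | linear_combination -htr'

end KulkarniNomizu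

section MinimalGraph

variable {g₀ : Matrix (Fin 2) (Fin 2) ℝ} {ε : ℝ} {φ : (Fin 2 → ℝ) → ℝ} {p : Fin 2 → ℝ}

/-- The covector of first partial derivatives `φ_{,α}`. -/
noncomputable def gradientCovector (φ : (Fin 2 → ℝ) → ℝ) (p : Fin 2 → ℝ) : Fin 2 → ℝ :=
  fun α => pd α φ p

/-- The matrix of second partial derivatives `φ_{,αβ}`. -/
noncomputable def hessian (φ : (Fin 2 → ℝ) → ℝ) (p : Fin 2 → ℝ) : Matrix (Fin 2) (Fin 2) ℝ :=
  Matrix.of fun α β => pd2 α β φ p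

lemma isSymm_hessian (hφ : ContDiffAt ℝ 2 φ p) : (hessian φ p).IsSymm := by
  ext α β
  exact pd_pd_comm β α hφ

lemma rho_eq_one_add_dotProduct (g₀ : Matrix (Fin 2) (Fin 2) ℝ) (ε : ℝ) (φ : (Fin 2 → ℝ) → ℝ)
    (p : Fin 2 → ℝ) : rho g₀ ε φ p = 1 + ε * (gradientCovector φ p ⬝ᵥ phiUp g₀ φ p) := by
  simp only [rho, dotProduct, gradientCovector, phiUp, Finset.mul_sum]
  simp only [mul_left_comm, mul_assoc]

lemma hLow_eq_add_vecMulVec (g₀ : Matrix (Fin 2) (Fin 2) ℝ) (ε : ℝ) (φ : (Fin 2 → ℝ) → ℝ)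
    (p : Fin 2 → ℝ) :
    hLow g₀ ε φ p = g₀ + ε • vecMulVec (gradientCovector φ p) (gradientCovector φ p) := by
  ext α β
  simp [hLow, vecMulVec_apply, gradientCovector, mul_assoc]

lemma gLow_eq_smul_hLow (g₀ : Matrix (Fin 2) (Fin 2) ℝ) (ε : ℝ) (φ : (Fin 2 → ℝ) → ℝ)
    (p : Fin 2 → ℝ) : gLow g₀ ε φ p = (√(rho g₀ ε φ p))⁻¹ • hLow g₀ ε φ p :=
  rfl

lemma gUp_eq_smul_hUp (g₀ : Matrix (Fin 2) (Fin 2) ℝ) (ε : ℝ) (φ : (Fin 2 → ℝ) → ℝ)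
    (p : Fin 2 → ℝ) : gUp g₀ ε φ p = √(rho g₀ ε φ p) • hUp g₀ ε φ p :=
  rfl

lemma isSymm_hLow (hsym : g₀.IsSymm) : (hLow g₀ ε φ p).IsSymm := by
  rw [hLow_eq_add_vecMulVec, Matrix.IsSymm, transpose_add, transpose_smul, transpose_vecMulVec,
    hsym.eq]

lemma isSymm_gLow (hsym : g₀.IsSymm) : (gLow g₀ ε φ p).IsSymm := by
  rw [gLow_eq_smul_hLow]
  exact (isSymm_hLow hsym).smul _

lemma hLow_mulVec_phiUp (hdet : g₀.det ≠ 0) :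
    hLow g₀ ε φ p *ᵥ phiUp g₀ φ p = rho g₀ ε φ p • gradientCovector φ p := by
  have hφ : phiUp g₀ φ p = g₀⁻¹ *ᵥ gradientCovector φ p := rfl
  have hflat : g₀ *ᵥ phiUp g₀ φ p = gradientCovector φ p := by
    rw [hφ, mulVec_mulVec, mul_nonsing_inv _ hdet.isUnit, one_mulVec]
  rw [hLow_eq_add_vecMulVec, rho_eq_one_add_dotProduct, add_mulVec, hflat, smul_mulVec,
    vecMulVec_mulVec, add_smul, one_smul, mul_smul, op_smul_eq_smul]

lemma hLow_mul_hUp (hsym : g₀.IsSymm) (hdet : g₀.det ≠ 0) (hρ : rho g₀ ε φ p ≠ 0) :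
    hLow g₀ ε φ p * hUp g₀ ε φ p = 1 := by
  have hup : hUp g₀ ε φ p =
      g₀⁻¹ - (ε / rho g₀ ε φ p) • vecMulVec (phiUp g₀ φ p) (phiUp g₀ φ p) := by
    ext α β
    simp [hUp, vecMulVec_apply, mul_assoc]
  have hφ : gradientCovector φ p ᵥ* g₀⁻¹ = phiUp g₀ φ p := by
    rw [← mulVec_transpose, hsym.inv.eq]
    rfl
  rw [hup, Matrix.mul_sub, Matrix.mul_smul, mul_vecMulVec, hLow_mulVec_phiUp hdet,
    hLow_eq_add_vecMulVec, Matrix.add_mul, mul_nonsing_inv _ hdet.isUnit, smul_mul,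
    vecMulVec_mul, hφ, smul_vecMulVec, smul_smul, div_mul_cancel₀ _ hρ, add_sub_cancel_right]

lemma inv_hLow (hsym : g₀.IsSymm) (hdet : g₀.det ≠ 0) (hρ : rho g₀ ε φ p ≠ 0) :
    (hLow g₀ ε φ p)⁻¹ = hUp g₀ ε φ p :=
  inv_eq_right_inv (hLow_mul_hUp hsym hdet hρ)

lemma inv_gLow (hsym : g₀.IsSymm) (hdet : g₀.det ≠ 0) (hρ : 0 < rho g₀ ε φ p) :
    (gLow g₀ ε φ p)⁻¹ = gUp g₀ ε φ p := by
  refine inv_eq_right_inv ?_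
  rw [gLow_eq_smul_hLow, gUp_eq_smul_hUp, smul_mul_smul_comm, hLow_mul_hUp hsym hdet hρ.ne',
    inv_mul_cancel₀ (Real.sqrt_pos.2 hρ).ne', one_smul]

lemma det_hLow (hdet : g₀.det ≠ 0) : (hLow g₀ ε φ p).det = g₀.det * rho g₀ ε φ p := by
  rw [hLow_eq_add_vecMulVec, ← smul_vecMulVec, vecMulVec_eq Unit,
    det_add_replicateCol_mul_replicateRow hdet.isUnit, Matrix.mul_assoc, ← replicateCol_mulVec,
    mulVec_smul, rho_eq_one_add_dotProduct, det_unique (n := Unit), Matrix.add_apply,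
    Matrix.one_apply_eq, replicateRow_mul_replicateCol_apply, dotProduct_smul, smul_eq_mul]
  rfl

lemma det_gLow (hdet : g₀.det ≠ 0) (hρ : 0 < rho g₀ ε φ p) :
    (gLow g₀ ε φ p).det = g₀.det := by
  rw [gLow_eq_smul_hLow, det_smul, det_hLow hdet, Fintype.card_fin, inv_pow,
    Real.sq_sqrt hρ.le, mul_left_comm, inv_mul_cancel₀ hρ.ne', mul_one]

lemma contDiffAt_rho {m n : WithTop ℕ∞} (hφ : ContDiffAt ℝ n φ p) (hmn : m + 1 ≤ n) :
    ContDiffAt ℝ m (rho g₀ ε φ) p := by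
  have hpd (i : Fin 2) : ContDiffAt ℝ m (pd i φ) p := contDiffAt_pd i hφ hmn
  unfold rho
  fun_prop

lemma contDiffAt_gLow_apply {m n : WithTop ℕ∞} (hφ : ContDiffAt ℝ n φ p) (hmn : m + 1 ≤ n)
    (hρ : 0 < rho g₀ ε φ p) (α β : Fin 2) :
    ContDiffAt ℝ m (fun q => gLow g₀ ε φ q α β) p := by
  have hpd (i : Fin 2) : ContDiffAt ℝ m (pd i φ) p := contDiffAt_pd i hφ hmn
  have hsqrt : ContDiffAt ℝ m (fun q => (√(rho g₀ ε φ q))⁻¹) p :=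
    ((contDiffAt_rho hφ hmn).sqrt hρ.ne').inv (Real.sqrt_pos.2 hρ).ne'
  unfold gLow
  fun_prop

lemma pd_rho (hsym : g₀.IsSymm) (hφ : ContDiffAt ℝ 2 φ p) (i : Fin 2) :
    pd i (rho g₀ ε φ) p = 2 * ε * (hessian φ p *ᵥ phiUp g₀ φ p) i := by
  have hpd (j : Fin 2) : DifferentiableAt ℝ (pd j φ) p :=
    (contDiffAt_pd j hφ one_add_one_eq_two.le).differentiableAt one_ne_zero
  have hinv : g₀⁻¹ 1 0 = g₀⁻¹ 0 1 := hsym.inv.apply 0 1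
  unfold rho
  simp (disch := fun_prop) only [pd_add, pd_const, pd_const_mul, pd_sum, pd_mul]
  simp only [hessian, Matrix.mulVec, dotProduct, phiUp, Matrix.of_apply, pd2, Fin.sum_univ_two,
    hinv]
  ring

lemma pd_gLow_apply (hsym : g₀.IsSymm) (hφ : ContDiffAt ℝ 2 φ p) (hρ : 0 < rho g₀ ε φ p)
    (i α β : Fin 2) :
    pd i (fun q => gLow g₀ ε φ q α β) p = ε / √(rho g₀ ε φ p) ^ 3 *
      (rho g₀ ε φ p * (hessian φ p i α * pd β φ p + pd α φ p * hessian φ p i β) -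
        (hessian φ p *ᵥ phiUp g₀ φ p) i * hLow g₀ ε φ p α β) := by
  have hpd (j : Fin 2) : DifferentiableAt ℝ (pd j φ) p :=
    (contDiffAt_pd j hφ one_add_one_eq_two.le).differentiableAt one_ne_zero
  have hrho : DifferentiableAt ℝ (rho g₀ ε φ) p :=
    (contDiffAt_rho hφ one_add_one_eq_two.le).differentiableAt one_ne_zero
  have hsqrt : √(rho g₀ ε φ p) ≠ 0 := (Real.sqrt_pos.2 hρ).ne'
  have hinv : DifferentiableAt ℝ (fun q => (√(rho g₀ ε φ q))⁻¹) p :=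
    (hrho.sqrt hρ.ne').inv hsqrt
  unfold gLow
  simp (disch := first | exact hρ | fun_prop) only [pd_mul, pd_inv_sqrt, pd_add, pd_const,
    pd_rho hsym hφ]
  have hsq : rho g₀ ε φ p = √(rho g₀ ε φ p) ^ 2 := (Real.sq_sqrt hρ.le).symm
  simp only [hLow, hessian, Matrix.of_apply, pd2]
  field_simp
  rw [← hsq]
  ring

-- Since `ρ φ_{,γ} = h_{γμ} φ^μ`, antisymmetrizing `∂_α g_{βγ}` in `α` and `γ` leaves the
-- Kulkarni–Nomizu product of `h` and the Hessian contracted with `φ^μ`.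
lemma isCodazziAt_gLow (hsym : g₀.IsSymm) (hdet : g₀.det ≠ 0) (hφ : ContDiffAt ℝ 2 φ p)
    (hρ : 0 < rho g₀ ε φ p) (hmin : minimalAt g₀ ε φ p) : IsCodazziAt (gLow g₀ ε φ) p := by
  intro α β γ
  have hdet_h : (hLow g₀ ε φ p).det ≠ 0 := by
    rw [det_hLow hdet]
    exact mul_ne_zero hdet hρ.ne'
  have htr : ∑ α, ∑ β, (hLow g₀ ε φ p)⁻¹ α β * hessian φ p α β = 0 := by
    rw [inv_hLow hsym hdet hρ.ne']
    exact hmin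
  have hKN := mul_add_mul_eq_of_sum_inv_mul_eq_zero (isSymm_hLow hsym) (isSymm_hessian hφ)
    hdet_h htr α β γ
  have hraise (δ : Fin 2) :
      rho g₀ ε φ p * pd δ φ p = ∑ μ, hLow g₀ ε φ p δ μ * phiUp g₀ φ p μ :=
    (congrFun (hLow_mulVec_phiUp hdet) δ).symm
  have hcontract := Finset.sum_congr rfl fun μ (_ : μ ∈ Finset.univ) =>
    congrArg (· * phiUp g₀ φ p μ) (hKN μ)
  simp only [matrixPd, Matrix.of_apply, pd_gLow_apply hsym hφ hρ]
  congr 1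
  rw [(isSymm_hLow hsym).apply α β, (isSymm_hLow hsym).apply γ β, (isSymm_hessian hφ).apply α γ]
  simp only [Matrix.mulVec, dotProduct, Fin.sum_univ_two] at hraise hcontract ⊢
  linear_combination hessian φ p α β * hraise γ - hessian φ p γ β * hraise α + hcontract

end MinimalGraph

theorem stmt17_general {g₀ : Matrix (Fin 2) (Fin 2) ℝ} (hsym : g₀.IsSymm) (hdet : g₀.det ≠ 0)
    {ε : ℝ} {φ : (Fin 2 → ℝ) → ℝ} {p : Fin 2 → ℝ} (hφ : ContDiffAt ℝ 3 φ p)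
    (hρ : 0 < rho g₀ ε φ p) (hmin : ∀ᶠ q in 𝓝 p, minimalAt g₀ ε φ q) (μ ν : Fin 2) :
    ∑ α, pd α (fun q => ∑ β, gUp g₀ ε φ q α β *
        ∑ γ, gUp g₀ ε φ q μ γ * pd β (fun r => gLow g₀ ε φ r γ ν) q) p = 0 := by
  have hρ' : ∀ᶠ q in 𝓝 p, 0 < rho g₀ ε φ q :=
    (contDiffAt_rho (m := 2) hφ two_add_one_eq_three.le).continuousAt.eventually_const_lt hρ
  have hφ' : ∀ᶠ q in 𝓝 p, ContDiffAt ℝ 2 φ q :=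
    (hφ.of_le (by norm_num)).eventually (by simp)
  have hcurrent (α : Fin 2) : (fun q => ∑ β, gUp g₀ ε φ q α β *
      ∑ γ, gUp g₀ ε φ q μ γ * pd β (fun r => gLow g₀ ε φ r γ ν) q) =ᶠ[𝓝 p]
        fun q => sigmaCurrent (gLow g₀ ε φ) α q μ ν := by
    filter_upwards [hρ'] with q hq
    simp [sigmaCurrent, inv_gLow hsym hdet hq, Matrix.sum_apply, Matrix.mul_apply, matrixPd]
  have hcod : ∀ᶠ q in 𝓝 p, IsCodazziAt (gLow g₀ ε φ) q := by
    filter_upwards [hφ', hρ', hmin] with q hφq hρq hminq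
    exact isCodazziAt_gLow hsym hdet hφq hρq hminq
  have hsigma := sum_matrixPd_sigmaCurrent_eq_zero
    (contDiffAt_gLow_apply hφ two_add_one_eq_three.le hρ)
    (.of_forall fun q => isSymm_gLow hsym) hdet (hρ'.mono fun q hq => det_gLow hdet hq) hcod
  simp only [pd_congr _ (hcurrent _)]
  simpa only [Matrix.sum_apply, matrixPd, Matrix.of_apply, Matrix.zero_apply]
    using congrFun₂ hsigma μ ν

theorem stmt17 (g₀ : Matrix (Fin 2) (Fin 2) ℝ) (hsym : g₀.IsSymm) (hdet : g₀.det ≠ 0)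
    (ε : ℝ) (hε : ε = 1 ∨ ε = -1) (φ : (Fin 2 → ℝ) → ℝ) (hφ : ContDiff ℝ (⊤ : ℕ∞) φ)
    (hρ : ∀ p, 0 < rho g₀ ε φ p) (hmin : ∀ p, minimalAt g₀ ε φ p) :
    ∀ p : Fin 2 → ℝ, ∀ μ ν : Fin 2,
      ∑ α, pd α (fun q => ∑ β, gUp g₀ ε φ q α β *
          ∑ γ, gUp g₀ ε φ q μ γ * pd β (fun r => gLow g₀ ε φ r γ ν) q) p = 0 :=
  fun p => stmt17_general hsym hdet (contDiff_infty.1 hφ 3).contDiffAt (hρ p) (.of_forall hmin)
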